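/- There exists a unique representation basis A of the integers such that A(-x,x)/log x tends to infinity as x → ∞. -/

import Mathlib

open Filter Set

/-- `repCount A n` is the number of representations of `n` as `a + a'` with
`a ≤ a'` and `a, a' ∈ A`. -/
noncomputable def repCount (A : Set ℤ) (n : ℤ) : ℕ :=
  {p : ℤ × ℤ | p.1 ∈ A ∧ p.2 ∈ A ∧ p.1 ≤ p.2 ∧ p.1 + p.2 = n}.ncard

/-- `A` is a unique representation basis of `ℤ` if `r_A(n) = 1` for all `n`. -/
def IsUniqueRepBasis (A : Set ℤ) : Prop := ∀ n : ℤ, repCount A n = 1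

/-- `countIn A y x` is the number of elements of `A` in the real interval `[y, x]`. -/
noncomputable def countIn (A : Set ℤ) (y x : ℝ) : ℕ :=
  {a : ℤ | a ∈ A ∧ y ≤ (a : ℝ) ∧ (a : ℝ) ≤ x}.ncard

/-!
The basis is built greedily from `{0}`. Let `S` be a Sidon set with `m` elements and let `n` be the
first integer, in the order `0, -1, 1, -2, 2, …`, that is missing from `S + S`. Since `S + S` has
at most `m ^ 2` elements, `|n| ≤ m ^ 2`. Adjoining `b` and `n - b` represents `n`, and the result
is again a Sidon set unless `b` solves one of `9 m ^ 3` linear equations, so some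
`b ∈ [0, 9 m ^ 3]` will do. After `k` steps there are `2 k + 1` elements, of size `O(k ^ 3)`; the
union is thus a unique representation basis with `A(-x, x) ≫ x ^ (1 / 3)`.
-/

open Function Asymptotics
open scoped Finset Pointwise

/-- `A` is a Sidon set: sums of two elements of `A` are distinct up to the order of the summands. -/
def IsSidon {G : Type*} [Add G] (A : Set G) : Prop :=
  ∀ ⦃a⦄, a ∈ A → ∀ ⦃b⦄, b ∈ A → ∀ ⦃c⦄, c ∈ A → ∀ ⦃d⦄, d ∈ A →
    a + b = c + d → a = c ∧ b = d ∨ a = d ∧ b = c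

section Sidon

variable {G : Type*}

lemma isSidon_singleton [Add G] (a : G) : IsSidon {a} := by
  rintro _ rfl _ rfl _ rfl _ rfl -
  exact .inl ⟨rfl, rfl⟩

lemma isSidon_iUnion_of_directed [Add G] {ι : Sort*} {S : ι → Set G} (hS : Directed (· ⊆ ·) S)
    (h : ∀ i, IsSidon (S i)) : IsSidon (⋃ i, S i) := by
  simp only [IsSidon, mem_iUnion]
  rintro a ⟨i, ha⟩ b ⟨j, hb⟩ c ⟨k, hc⟩ d ⟨l, hd⟩
  obtain ⟨p, hip, hjp⟩ := hS i j
  obtain ⟨q, hkq, hlq⟩ := hS k l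
  obtain ⟨r, hpr, hqr⟩ := hS p q
  exact h r (hpr (hip ha)) (hpr (hjp hb)) (hqr (hkq hc)) (hqr (hlq hd))

protected lemma IsSidon.insert [AddCommMonoid G] [IsCancelAdd G] {A : Set G} (hA : IsSidon A)
    {b : G} (hb : ∀ c ∈ insert b A, b + c ∉ A + A) : IsSidon (insert b A) := by
  have sums_with_b {c d e : G} (hc : c ∈ insert b A) (hd : d ∈ insert b A) (he : e ∈ insert b A)
      (h : b + c = d + e) : b = d ∧ c = e ∨ b = e ∧ c = d := by
    rcases hd with rfl | hd
    · exact .inl ⟨rfl, add_left_cancel h⟩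
    rcases he with rfl | he
    · exact .inr ⟨rfl, add_left_cancel (h.trans (add_comm d e))⟩
    exact absurd (h ▸ add_mem_add hd he) (hb c hc)
  rintro a (rfl | ha) c hc d hd e he h
  · exact sums_with_b hc hd he h
  rcases hc with rfl | hc
  · grind [sums_with_b (.inr ha) hd he (by rw [add_comm, h])]
  rcases hd with rfl | hd
  · grind [sums_with_b he (.inr ha) (.inr hc) h.symm]
  rcases he with rfl | he
  · grind [sums_with_b (.inr hd) (.inr ha) (.inr hc) (by rw [add_comm, h])]
  exact hA ha hc hd he h

end Sidon

lemma IsSidon.isUniqueRepBasis {A : Set ℤ} (hA : IsSidon A) (hcover : A + A = univ) :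
    IsUniqueRepBasis A := by
  intro n
  obtain ⟨x, hx, y, hy, hxy, rfl⟩ : ∃ x ∈ A, ∃ y ∈ A, x ≤ y ∧ x + y = n := by
    obtain ⟨x, hx, y, hy, rfl⟩ := hcover.ge (mem_univ n)
    rcases le_total x y with h | h
    exacts [⟨x, hx, y, hy, h, rfl⟩, ⟨y, hy, x, hx, h, add_comm y x⟩]
  refine ncard_eq_one.2 ⟨(x, y), eq_singleton_iff_unique_mem.2 ⟨⟨hx, hy, hxy, rfl⟩, ?_⟩⟩
  rintro ⟨u, v⟩ ⟨hu, hv, huv, h⟩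
  rcases hA hu hv hx hy h with ⟨rfl, rfl⟩ | ⟨rfl, rfl⟩
  exacts [rfl, Prod.ext (huv.antisymm hxy) (hxy.antisymm huv)]

/-- A finite set of integers such that, for every other `b`, adjoining the pair `b`, `n - b` to a
nonempty Sidon set `S` with `n ∉ S + S` creates no coincidence between sums. A coincidence is an
equation `j * b = t` with `j ∈ {1, 2, 3}`, of which the entries are the solutions; a quotient is
rounded down where there is no integer solution. -/
def forbidden (S : Finset ℤ) (n : ℤ) : Finset ℤ :=
  (S ×ˢ S ×ˢ S).biUnion fun (x, y, z) ↦
    [(x + y) / 2, x + y - z, n / 2, n - x, (n + x) / 3, (n + x - y) / 2, n + x - y - z,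
      (2 * n - x) / 3, (2 * n - x - y) / 2].toFinset

lemma card_forbidden_le (S : Finset ℤ) (n : ℤ) : #(forbidden S n) ≤ 9 * #S ^ 3 :=
  calc #(forbidden S n) ≤ #(S ×ˢ S ×ˢ S) * 9 :=
        Finset.card_biUnion_le_card_mul _ _ _ fun _ _ ↦ List.toFinset_card_le _
    _ = 9 * #S ^ 3 := by simp only [Finset.card_product]; ring

lemma ne_of_notMem_forbidden {S : Finset ℤ} {n b x y z : ℤ} (hb : b ∉ forbidden S n)
    (hx : x ∈ S) (hy : y ∈ S) (hz : z ∈ S) :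
    2 * b ≠ x + y ∧ b ≠ x + y - z ∧ 2 * b ≠ n ∧ b ≠ n - x ∧ 3 * b ≠ n + x ∧
      2 * b ≠ n + x - y ∧ b ≠ n + x - y - z ∧ 3 * b ≠ 2 * n - x ∧ 2 * b ≠ 2 * n - x - y := by
  contrapose hb
  refine Finset.mem_biUnion.2 ⟨(x, y, z), by simp [hx, hy, hz], ?_⟩
  simp only [List.mem_toFinset, List.mem_cons, List.not_mem_nil, or_false]
  omega

lemma IsSidon.insert_sub_insert {S : Finset ℤ} {n b : ℤ} (hS : IsSidon (S : Set ℤ))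
    (hne : S.Nonempty) (hn : n ∉ S + S) (hb : b ∉ forbidden S n) :
    IsSidon (insert (n - b) (insert b S) : Set ℤ) := by
  obtain ⟨s, hs⟩ := hne
  -- Every coincidence `b + c = x + y` or `(n - b) + c = x + y` is an equation ruled out by
  -- `forbidden`, except `(n - b) + b = x + y` with `x, y ∈ S`, which contradicts `hn`.
  refine (hS.insert ?_).insert ?_
  · rintro c (rfl | hc) ⟨x, hx, y, hy, h⟩
    · grind [ne_of_notMem_forbidden hb hx hy hx]
    · grind [ne_of_notMem_forbidden hb hx hy hc]
  · rintro c (rfl | rfl | hc) ⟨x, rfl | hx, y, rfl | hy, h⟩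
    · grind [ne_of_notMem_forbidden hb hs hs hs]
    · grind [ne_of_notMem_forbidden hb hy hs hs]
    · grind [ne_of_notMem_forbidden hb hx hs hs]
    · grind [ne_of_notMem_forbidden hb hx hy hs]
    · grind [ne_of_notMem_forbidden hb hs hs hs]
    · grind [ne_of_notMem_forbidden hb hy hs hs]
    · grind [ne_of_notMem_forbidden hb hx hs hs]
    · exact hn (Finset.mem_add.2 ⟨x, hx, y, hy, by grind⟩)
    · grind [ne_of_notMem_forbidden hb hc hs hs]
    · grind [ne_of_notMem_forbidden hb hc hy hs]
    · grind [ne_of_notMem_forbidden hb hc hx hs]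
    · grind [ne_of_notMem_forbidden hb hc hx hy]

lemma exists_isSidon_superset {S : Finset ℤ} (hS : IsSidon (S : Set ℤ)) (hne : S.Nonempty) {n : ℤ}
    (hn : n ∉ S + S) :
    ∃ T : Finset ℤ, S ⊆ T ∧ IsSidon (T : Set ℤ) ∧ #T = #S + 2 ∧ n ∈ T + T ∧
      ∀ a ∈ T, a ∈ S ∨ |a| ≤ |n| + 9 * (#S : ℤ) ^ 3 := by
  obtain ⟨b, hbI, hb⟩ : ∃ b ∈ Finset.Icc (0 : ℤ) (9 * #S ^ 3 : ℕ), b ∉ forbidden S n := by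
    refine Finset.exists_mem_notMem_of_card_lt_card ?_
    have := card_forbidden_le S n
    rw [Int.card_Icc]
    omega
  obtain ⟨hb_nonneg, hb_le⟩ := Finset.mem_Icc.1 hbI
  have hbS : b ∉ S := fun h ↦ by grind [ne_of_notMem_forbidden hb h h h]
  have hnbS : n - b ∉ insert b S := by
    obtain ⟨s, hs⟩ := hne
    refine Finset.mem_insert.not.2 (not_or.2 ⟨?_, fun h ↦ ?_⟩)
    · grind [ne_of_notMem_forbidden hb hs hs hs]
    · grind [ne_of_notMem_forbidden hb h hs hs]
  refine ⟨insert (n - b) (insert b S), by grind, ?_, ?_, ?_, ?_⟩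
  · simpa only [Finset.coe_insert] using hS.insert_sub_insert hne hn hb
  · rw [Finset.card_insert_of_notMem hnbS, Finset.card_insert_of_notMem hbS]
  · exact Finset.mem_add.2 ⟨n - b, by simp, b, by simp, sub_add_cancel n b⟩
  · have hb_abs : |b| ≤ 9 * (#S : ℤ) ^ 3 := by
      rw [abs_of_nonneg hb_nonneg]
      exact_mod_cast hb_le
    have hnb_abs : |n - b| ≤ |n| + 9 * (#S : ℤ) ^ 3 := (abs_sub n b).trans (by gcongr)
    grind

lemma exists_le_card_notMem_forall_lt_mem {α : Type*} (T : Finset α) {e : ℕ → α}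
    (he : Injective e) : ∃ k ≤ #T, e k ∉ T ∧ ∀ i < k, e i ∈ T := by
  classical
  obtain ⟨_, ha, haT⟩ : ∃ a ∈ (Finset.range (#T + 1)).image e, a ∉ T := by
    refine Finset.exists_mem_notMem_of_card_lt_card ?_
    simp [Finset.card_image_of_injective _ he]
  obtain ⟨m, hm, rfl⟩ := Finset.mem_image.1 ha
  have hmissing : ∃ k, e k ∉ T := ⟨m, haT⟩
  have hfind_le : Nat.find hmissing ≤ m := Nat.find_min' hmissing haT
  exact ⟨Nat.find hmissing, hfind_le.trans (Finset.mem_range_succ_iff.1 hm),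
    Nat.find_spec hmissing, fun i hi ↦ not_not.1 (Nat.find_min hmissing hi)⟩

lemma abs_le_intEquivNat : ∀ n : ℤ, |n| ≤ Equiv.intEquivNat n
  | .ofNat n => by
    change |(n : ℤ)| ≤ (2 * n : ℕ)
    grind
  | .negSucc n => by
    change |Int.negSucc n| ≤ (2 * n + 1 : ℕ)
    grind

/-- The invariant of the greedy construction: a nonempty finite Sidon set whose elements are
bounded by a multiple of the cube of its cardinality. -/
structure IsGreedyStage (S : Finset ℤ) : Prop where
  isSidon : IsSidon (S : Set ℤ)
  nonempty : S.Nonempty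
  abs_le : ∀ a ∈ S, |a| ≤ 10 * (#S : ℤ) ^ 3

lemma isGreedyStage_singleton_zero : IsGreedyStage {0} where
  isSidon := by simpa only [Finset.coe_singleton] using isSidon_singleton (0 : ℤ)
  nonempty := Finset.singleton_nonempty 0
  abs_le := by simp

lemma IsGreedyStage.exists_next {S : Finset ℤ} (hS : IsGreedyStage S) :
    ∃ T : Finset ℤ, IsGreedyStage T ∧ S ⊆ T ∧ #T = #S + 2 ∧
      ∀ k, (∀ i < k, Equiv.intEquivNat.symm i ∈ S + S) → Equiv.intEquivNat.symm k ∈ T + T := by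
  obtain ⟨m, hm_le, hm, hlt_m⟩ :=
    exists_le_card_notMem_forall_lt_mem (S + S) Equiv.intEquivNat.symm.injective
  obtain ⟨T, hST, hT, hcard, hmT, hbound⟩ := exists_isSidon_superset hS.isSidon hS.nonempty hm
  refine ⟨T, ⟨hT, hS.nonempty.mono hST, fun a ha ↦ ?_⟩, hST, hcard, fun k hk ↦ ?_⟩
  · have hcard_le : (#S : ℤ) ≤ #T := mod_cast Finset.card_le_card hST
    have hpow_le : 10 * (#S : ℤ) ^ 3 ≤ 10 * (#T : ℤ) ^ 3 := by gcongr
    have hmissing : |Equiv.intEquivNat.symm m| ≤ (#S : ℤ) ^ 3 :=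
      calc |Equiv.intEquivNat.symm m| ≤ (m : ℤ) := by
            simpa using abs_le_intEquivNat (Equiv.intEquivNat.symm m)
        _ ≤ (#S * #S : ℕ) := mod_cast hm_le.trans Finset.card_add_le
        _ ≤ (#S : ℤ) ^ 3 := by
            rw [← pow_two]
            exact_mod_cast Nat.pow_le_pow_right hS.nonempty.card_pos (by norm_num)
    rcases hbound a ha with haS | ha_le
    · exact (hS.abs_le a haS).trans hpow_le
    · linarith
  · rcases lt_trichotomy k m with h | rfl | h
    · exact Finset.add_subset_add hST hST (hlt_m k h)
    · exact hmT
    · exact absurd (hk m h) hm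

lemma exists_greedy_chain :
    ∃ S : ℕ → Finset ℤ, Monotone S ∧ (∀ k, IsGreedyStage (S k)) ∧ (∀ k, #(S k) = 2 * k + 1) ∧
      ∀ n, ∃ k, n ∈ S k + S k := by
  choose next hnext hsub hcard hcover using fun S : {S // IsGreedyStage S} ↦ S.2.exists_next
  let stage (k : ℕ) : {S // IsGreedyStage S} :=
    (fun S ↦ ⟨next S, hnext S⟩)^[k] ⟨{0}, isGreedyStage_singleton_zero⟩
  have stage_succ (k : ℕ) : (stage (k + 1)).1 = next (stage k) := by
    simp only [stage, iterate_succ_apply']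
  have hmono (k : ℕ) : (stage k).1 ⊆ (stage (k + 1)).1 := stage_succ k ▸ hsub (stage k)
  have hrep (k : ℕ) : ∀ i < k, Equiv.intEquivNat.symm i ∈ (stage k).1 + (stage k).1 := by
    induction k with
    | zero => simp
    | succ k ih =>
      intro i hi
      rcases Nat.lt_succ_iff_lt_or_eq.1 hi with h | rfl
      · exact Finset.add_subset_add (hmono k) (hmono k) (ih i h)
      · exact stage_succ i ▸ hcover (stage i) i ih
  refine ⟨fun k ↦ (stage k).1, monotone_nat_of_le_succ hmono, fun k ↦ (stage k).2, fun k ↦ ?_,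
    fun n ↦ ⟨Equiv.intEquivNat n + 1, ?_⟩⟩
  · induction k with
    | zero => rfl
    | succ k ih => grind
  · simpa using hrep _ _ (Nat.lt_succ_self (Equiv.intEquivNat n))

lemma card_le_countIn {A : Set ℤ} {S : Finset ℤ} {x : ℝ} (hSA : ↑S ⊆ A)
    (hS : ∀ a ∈ S, |(a : ℝ)| ≤ x) : #S ≤ countIn A (-x) x := by
  rw [← ncard_coe_finset]
  refine ncard_le_ncard (fun a ha ↦ ⟨hSA ha, abs_le.1 (hS a ha)⟩) ?_
  refine (finite_Icc ⌈-x⌉ ⌊x⌋).subset ?_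
  rintro a ⟨-, hl, hr⟩
  exact ⟨Int.ceil_le.2 hl, Int.le_floor.2 hr⟩

lemma rpow_inv_isBigO_countIn {A : Set ℤ} {C : ℝ} (hC : 0 < C) {d : ℕ} (hd : d ≠ 0)
    (h : ∀ᶠ k : ℕ in atTop, ∃ S : Finset ℤ, ↑S ⊆ A ∧ k ≤ #S ∧
      ∀ a ∈ S, |(a : ℝ)| ≤ C * (k : ℝ) ^ d) :
    (fun x : ℝ ↦ x ^ (d : ℝ)⁻¹) =O[atTop] fun x ↦ (countIn A (-x) x : ℝ) := by
  let t (x : ℝ) : ℝ := (x / C) ^ (d : ℝ)⁻¹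
  have ht_pow {x : ℝ} (hx : 0 ≤ x) : C * t x ^ d = x := by
    rw [Real.rpow_inv_natCast_pow (by positivity) hd, mul_div_cancel₀ x hC.ne']
  have hC_mul_t {x : ℝ} (hx : 0 ≤ x) : x ^ (d : ℝ)⁻¹ = C ^ (d : ℝ)⁻¹ * t x := by
    rw [← Real.mul_rpow hC.le (by positivity), mul_div_cancel₀ x hC.ne']
  have ht_tendsto : Tendsto t atTop atTop :=
    (tendsto_rpow_atTop (by positivity)).comp (tendsto_id.atTop_div_const hC)
  have hfloor_le : ∀ᶠ x in atTop, ⌊t x⌋₊ ≤ countIn A (-x) x := by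
    filter_upwards [(tendsto_nat_floor_atTop.comp ht_tendsto).eventually h, eventually_ge_atTop 0]
      with x ⟨S, hSA, hcard, hS⟩ hx
    refine hcard.trans (card_le_countIn hSA fun a ha ↦ (hS a ha).trans ?_)
    calc C * (⌊t x⌋₊ : ℝ) ^ d ≤ C * t x ^ d := by
          gcongr
          exact Nat.floor_le (by positivity)
      _ = x := ht_pow hx
  calc (fun x : ℝ ↦ x ^ (d : ℝ)⁻¹) =O[atTop] t :=
        (isBigO_const_mul_self (C ^ (d : ℝ)⁻¹) t atTop).congr'
          ((eventually_ge_atTop 0).mono fun _ hx ↦ (hC_mul_t hx).symm) .rfl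
    _ =O[atTop] fun x ↦ (⌊t x⌋₊ : ℝ) :=
        (isEquivalent_nat_floor (R := ℝ)).symm.isBigO.comp_tendsto ht_tendsto
    _ =O[atTop] fun x ↦ (countIn A (-x) x : ℝ) := by
        refine .of_bound' ?_
        filter_upwards [hfloor_le] with x hx
        simpa using hx

lemma exists_isUniqueRepBasis_rpow_isBigO_countIn :
    ∃ A : Set ℤ, IsUniqueRepBasis A ∧
      (fun x : ℝ ↦ x ^ (3 : ℝ)⁻¹) =O[atTop] fun x ↦ (countIn A (-x) x : ℝ) := by
  obtain ⟨S, hmono, hS, hcard, hcover⟩ := exists_greedy_chain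
  have hsubset (k : ℕ) : (S k : Set ℤ) ⊆ ⋃ k, (S k : Set ℤ) :=
    subset_iUnion (fun k ↦ (S k : Set ℤ)) k
  refine ⟨⋃ k, (S k : Set ℤ), IsSidon.isUniqueRepBasis ?_ ?_, ?_⟩
  · have hmono_coe : Monotone fun k ↦ (S k : Set ℤ) := fun i j h ↦ Finset.coe_subset.2 (hmono h)
    exact isSidon_iUnion_of_directed hmono_coe.directed_le fun k ↦ (hS k).isSidon
  · refine eq_univ_of_forall fun n ↦ ?_
    obtain ⟨k, hk⟩ := hcover n
    obtain ⟨x, hx, y, hy, rfl⟩ := Finset.mem_add.1 hk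
    exact add_mem_add (hsubset k hx) (hsubset k hy)
  · refine rpow_inv_isBigO_countIn (C := 270) (d := 3) (by norm_num) (by norm_num) ?_
    filter_upwards [eventually_ge_atTop 1] with k hk
    refine ⟨S k, hsubset k, by grind, fun a ha ↦ ?_⟩
    have hk' : (1 : ℝ) ≤ k := mod_cast hk
    calc |(a : ℝ)| ≤ 10 * (2 * (k : ℝ) + 1) ^ 3 := by
          exact_mod_cast hcard k ▸ (hS k).abs_le a ha
      _ ≤ 10 * (3 * (k : ℝ)) ^ 3 := by gcongr; linarith
      _ = 270 * (k : ℝ) ^ 3 := by ring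

lemma tendsto_div_atTop_of_isLittleO {α : Type*} {l : Filter α} {f g : α → ℝ} (hfg : f =o[l] g)
    (hf : ∀ᶠ x in l, 0 < f x) (hg : ∀ᶠ x in l, 0 ≤ g x) :
    Tendsto (fun x ↦ g x / f x) l atTop := by
  refine tendsto_atTop.2 fun C ↦ ?_
  filter_upwards [hfg.bound (c := (|C| + 1)⁻¹) (by positivity), hf, hg] with x hx hfx hgx
  rw [Real.norm_of_nonneg hfx.le, Real.norm_of_nonneg hgx, ← div_eq_inv_mul,
    le_div_iff₀ (by positivity)] at hx
  rw [le_div_iff₀ hfx]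
  nlinarith [le_abs_self C]

/-- There exists a unique representation basis `A` such that `A(-x,x)/log x → ∞`. -/
theorem exists_urb_div_log_tendsto_atTop :
    ∃ A : Set ℤ, IsUniqueRepBasis A ∧
      Tendsto (fun x : ℝ => (countIn A (-x) x : ℝ) / Real.log x) atTop atTop := by
  obtain ⟨A, hA, hgrowth⟩ := exists_isUniqueRepBasis_rpow_isBigO_countIn
  have hlog : Real.log =o[atTop] fun x ↦ (countIn A (-x) x : ℝ) :=
    (isLittleO_log_rpow_atTop (by norm_num)).trans_isBigO hgrowth
  have hlog_pos : ∀ᶠ x in atTop, 0 < Real.log x :=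
    (eventually_gt_atTop 1).mono fun _ ↦ Real.log_pos
  have hcount_nonneg : ∀ᶠ x in atTop, 0 ≤ (countIn A (-x) x : ℝ) :=
    .of_forall fun _ ↦ Nat.cast_nonneg _
  exact ⟨A, hA, tendsto_div_atTop_of_isLittleO hlog hlog_pos hcount_nonneg⟩
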